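/- arXiv:1807.01813 — 5 statements merged into one kernel-verified Lean document; each statement's English description precedes it below -/
import Mathlib

section
/- For every τ ∈ [0, 2π], v(τ)^p + v(2π − τ)^p > 0; consequently the function w(τ) = 2π·v(τ)^p / (v(τ)^p + v(2π − τ)^p) is well defined and infinitely differentiable on a neighborhood of [0, 2π]. -/
/-!
The function `v - 1/2` is odd about `π`, so `v(τ) + v(2π - τ) = 1` for every real `τ`. A positive
sum `a + b` forces `a ^ n + b ^ n > 0` for every `n`: for even `n` because `a` and `b` are not both
zero, and for odd `n` because `x ↦ x ^ n` is odd and strictly increasing. Hence the denominator of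
`w` is positive on all of `ℝ`, where `w` is therefore a quotient of polynomials without poles.
-/

open Real

/-- The function `v` from equation (colt_kress_2), depending on an integer parameter `p`. -/
noncomputable def vCK (p : ℕ) (τ : ℝ) : ℝ :=
  (1 / (p : ℝ) - 1 / 2) * ((π - τ) / π) ^ 3 + (1 / (p : ℝ)) * ((τ - π) / π) + 1 / 2

/-- The Colton–Kress change of variables `w` from equation (colt_kress_1). -/
noncomputable def wCK (p : ℕ) (τ : ℝ) : ℝ :=
  2 * π * (vCK p τ) ^ p / ((vCK p τ) ^ p + (vCK p (2 * π - τ)) ^ p)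

open scoped ContDiff

lemma pow_add_pow_pos_of_add_pos {R : Type*} [Ring R] [LinearOrder R] [IsStrictOrderedRing R]
    {a b : R} (hab : 0 < a + b) (n : ℕ) : 0 < a ^ n + b ^ n := by
  rcases n.even_or_odd with hn | hn
  · rcases eq_or_ne a 0 with rfl | ha
    · have hb : b ≠ 0 := by simpa only [zero_add] using hab.ne'
      exact add_pos_of_nonneg_of_pos (hn.pow_nonneg 0) (hn.pow_pos hb)
    · exact add_pos_of_pos_of_nonneg (hn.pow_pos ha) (hn.pow_nonneg b)
  · have hlt : (-b) ^ n < a ^ n := hn.strictMono_pow (neg_lt_iff_pos_add.mpr hab)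
    rwa [hn.neg_pow, neg_lt_iff_pos_add] at hlt

lemma vCK_add_vCK_two_pi_sub (p : ℕ) (τ : ℝ) : vCK p τ + vCK p (2 * π - τ) = 1 := by
  unfold vCK
  ring

lemma wCK_denom_pos (p : ℕ) (τ : ℝ) : 0 < vCK p τ ^ p + vCK p (2 * π - τ) ^ p :=
  pow_add_pow_pos_of_add_pos (by simp only [vCK_add_vCK_two_pi_sub, zero_lt_one]) p

lemma contDiff_vCK (p : ℕ) {n : WithTop ℕ∞} : ContDiff ℝ n (vCK p) := by
  unfold vCK
  fun_prop

lemma contDiff_wCK (p : ℕ) {n : WithTop ℕ∞} : ContDiff ℝ n (wCK p) := by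
  have hv : ContDiff ℝ n (vCK p) := contDiff_vCK p
  have hv_reflect : ContDiff ℝ n fun τ ↦ vCK p (2 * π - τ) :=
    hv.comp (contDiff_const.sub contDiff_id)
  exact (contDiff_const.mul (hv.pow p)).div ((hv.pow p).add (hv_reflect.pow p))
    fun τ ↦ (wCK_denom_pos p τ).ne'

theorem wCK_well_defined_and_smooth_general (p : ℕ) :
    (∀ τ : ℝ, 0 < vCK p τ ^ p + vCK p (2 * π - τ) ^ p) ∧ ContDiff ℝ ω (wCK p) :=
  ⟨wCK_denom_pos p, contDiff_wCK p⟩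

theorem wCK_well_defined_and_smooth (p : ℕ) (hp : 2 ≤ p) :
    (∀ τ ∈ Set.Icc (0 : ℝ) (2 * π), 0 < (vCK p τ) ^ p + (vCK p (2 * π - τ)) ^ p) ∧
    ∃ U : Set ℝ, IsOpen U ∧ Set.Icc (0 : ℝ) (2 * π) ⊆ U ∧ ContDiffOn ℝ (⊤ : ℕ∞) (wCK p) U := by
  obtain ⟨hpos, hsmooth⟩ := wCK_well_defined_and_smooth_general p
  exact ⟨fun τ _ ↦ hpos τ, Set.univ, isOpen_univ, Set.subset_univ _,
    (hsmooth.of_le le_top).contDiffOn⟩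
end

section
/- The function w restricted to [0, 2π] is a strictly increasing bijection from [0, 2π] onto [0, 2π]. -/
/-!
In the variable `s = (τ - π) / π`, `v` is `(1/2 - 1/p) s³ + s/p + 1/2`. For `p ≥ 2` the cubic
coefficient is nonnegative and the linear one positive, so `v` increases strictly, from `v 0 = 0` to
`v (2π) = 1`. As `v - 1/2` is odd in `s`, `v (2π - τ) = 1 - v τ`, so `w` is `2π` times
`aᵖ / (aᵖ + (1 - a)ᵖ)` at `a = v τ`. For `a < b` in `[0, 1]`, comparing two such quotients amounts,
after cross-multiplication, to `a (1 - b) < b (1 - a)`. Continuity then gives surjectivity.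
-/

open Real

section OrderedRing

variable {R : Type*} [Ring R] [LinearOrder R] [IsStrictOrderedRing R]

lemma pow_add_one_sub_pow_pos (n : ℕ) {a : R} (ha : a ∈ Set.Icc 0 1) :
    0 < a ^ n + (1 - a) ^ n := by
  rcases ha.1.eq_or_lt with rfl | ha_pos
  · rw [sub_zero, one_pow]
    positivity
  · exact add_pos_of_pos_of_nonneg (pow_pos ha_pos n) (pow_nonneg (sub_nonneg.2 ha.2) n)

lemma strictMono_mul_pow_add_mul {n : ℕ} (hn : Odd n) {c d : R} (hc : 0 ≤ c) (hd : 0 < d) :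
    StrictMono fun s : R => c * s ^ n + d * s :=
  (hn.strictMono_pow.monotone.const_mul hc).add_strictMono (strictMono_mul_left_of_pos hd)

end OrderedRing

section PowRatio

variable {K : Type*} [Field K]

/-- The quotient `aⁿ / (aⁿ + (1 - a)ⁿ)`, which rescales the unit interval symmetrically about its
midpoint; the Colton–Kress function `w` is `2π` times its value at `v`. -/
def powRatio (n : ℕ) (a : K) : K :=
  a ^ n / (a ^ n + (1 - a) ^ n)

lemma powRatio_zero {n : ℕ} (hn : n ≠ 0) : powRatio n (0 : K) = 0 := by
  simp [powRatio, hn]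

lemma powRatio_one {n : ℕ} (hn : n ≠ 0) : powRatio n (1 : K) = 1 := by
  simp [powRatio, hn]

variable [LinearOrder K] [IsStrictOrderedRing K]

lemma div_add_lt_div_add_iff {a b c d : K} (hab : 0 < a + b) (hcd : 0 < c + d) :
    a / (a + b) < c / (c + d) ↔ a * d < c * b := by
  rw [div_lt_div_iff₀ hab hcd, mul_add, mul_add, mul_comm c a, add_lt_add_iff_left]

lemma strictMonoOn_powRatio {n : ℕ} (hn : n ≠ 0) :
    StrictMonoOn (powRatio n : K → K) (Set.Icc 0 1) := by
  intro a ha b hb hab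
  have hcross : a * (1 - b) < b * (1 - a) := by linarith
  have hcross_nonneg : 0 ≤ a * (1 - b) := mul_nonneg ha.1 (sub_nonneg.2 hb.2)
  rw [powRatio, powRatio, div_add_lt_div_add_iff (pow_add_one_sub_pow_pos n ha)
    (pow_add_one_sub_pow_pos n hb), ← mul_pow, ← mul_pow]
  exact pow_lt_pow_left₀ hcross hcross_nonneg hn

lemma continuousOn_powRatio [TopologicalSpace K] [IsTopologicalDivisionRing K] (n : ℕ) :
    ContinuousOn (powRatio n : K → K) (Set.Icc 0 1) :=
  ContinuousOn.div (by fun_prop) (by fun_prop) fun _ ha => (pow_add_one_sub_pow_pos n ha).ne'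

end PowRatio

lemma vCK_eq_cubic (p : ℕ) (τ : ℝ) :
    vCK p τ = (1 / 2 - 1 / (p : ℝ)) * ((τ - π) / π) ^ 3 + 1 / (p : ℝ) * ((τ - π) / π) + 1 / 2 := by
  rw [vCK]
  ring

lemma vCK_two_pi_sub (p : ℕ) (τ : ℝ) : vCK p (2 * π - τ) = 1 - vCK p τ := by
  rw [vCK, vCK]
  ring

lemma vCK_zero (p : ℕ) : vCK p 0 = 0 := by
  rw [vCK_eq_cubic, zero_sub, neg_div, div_self pi_ne_zero]
  ring

lemma vCK_two_pi (p : ℕ) : vCK p (2 * π) = 1 := by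
  simpa only [sub_zero, vCK_zero] using vCK_two_pi_sub p 0

lemma continuous_vCK (p : ℕ) : Continuous (vCK p) := by
  unfold vCK
  fun_prop

lemma strictMono_vCK {p : ℕ} (hp : 2 ≤ p) : StrictMono (vCK p) := by
  have hcubic : 0 ≤ 1 / 2 - 1 / (p : ℝ) :=
    sub_nonneg.2 (one_div_le_one_div_of_le two_pos (by exact_mod_cast hp))
  have hlinear : 0 < 1 / (p : ℝ) := by positivity
  have hscale : StrictMono fun τ : ℝ => (τ - π) / π := fun _ _ h =>
    div_lt_div_of_pos_right (sub_lt_sub_right h π) pi_pos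
  rw [funext (vCK_eq_cubic p)]
  exact ((strictMono_mul_pow_add_mul (by decide) hcubic hlinear).comp hscale).add_const (1 / 2)

lemma mapsTo_vCK_Icc {p : ℕ} (hp : 2 ≤ p) :
    Set.MapsTo (vCK p) (Set.Icc 0 (2 * π)) (Set.Icc 0 1) := by
  simpa only [vCK_zero, vCK_two_pi] using
    (strictMono_vCK hp).monotone.mapsTo_Icc (a := 0) (b := 2 * π)

lemma wCK_eq_powRatio (p : ℕ) (τ : ℝ) : wCK p τ = 2 * π * powRatio p (vCK p τ) := by
  rw [wCK, vCK_two_pi_sub, powRatio, mul_div_assoc]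

lemma wCK_zero {p : ℕ} (hp : p ≠ 0) : wCK p 0 = 0 := by
  rw [wCK_eq_powRatio, vCK_zero, powRatio_zero hp, mul_zero]

lemma wCK_two_pi {p : ℕ} (hp : p ≠ 0) : wCK p (2 * π) = 2 * π := by
  rw [wCK_eq_powRatio, vCK_two_pi, powRatio_one hp, mul_one]

lemma strictMonoOn_wCK {p : ℕ} (hp : 2 ≤ p) :
    StrictMonoOn (wCK p) (Set.Icc 0 (2 * π)) := by
  rw [funext (wCK_eq_powRatio p)]
  exact (strictMono_mul_left_of_pos two_pi_pos).comp_strictMonoOn <|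
    (strictMonoOn_powRatio (by lia)).comp ((strictMono_vCK hp).strictMonoOn _) (mapsTo_vCK_Icc hp)

lemma continuousOn_wCK {p : ℕ} (hp : 2 ≤ p) :
    ContinuousOn (wCK p) (Set.Icc 0 (2 * π)) := by
  rw [funext (wCK_eq_powRatio p)]
  exact continuousOn_const.mul <|
    (continuousOn_powRatio p).comp (continuous_vCK p).continuousOn (mapsTo_vCK_Icc hp)

theorem wCK_strictMono_bijective (p : ℕ) (hp : 2 ≤ p) :
    StrictMonoOn (wCK p) (Set.Icc 0 (2 * π)) ∧
    Set.BijOn (wCK p) (Set.Icc 0 (2 * π)) (Set.Icc 0 (2 * π)) := by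
  have hp_ne : p ≠ 0 := by lia
  have hmono : StrictMonoOn (wCK p) (Set.Icc 0 (2 * π)) := strictMonoOn_wCK hp
  have himage : wCK p '' Set.Icc 0 (2 * π) = Set.Icc 0 (2 * π) := by
    rw [(continuousOn_wCK hp).image_Icc_of_monotoneOn two_pi_pos.le hmono.monotoneOn,
      wCK_zero hp_ne, wCK_two_pi hp_ne]
  exact ⟨hmono, by simpa only [himage] using hmono.injOn.bijOn_image⟩
end

section
/- Exactness of Fejér's first quadrature rule: for every polynomial P with real coefficients of degree at most N − 1, Σ_{j=0}^{N−1} ω_j P(x_j) = ∫_{−1}^{1} P(x) dx. -/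
/-!
Fejér's rule is Gauss–Chebyshev quadrature in disguise. Let `W` be the Chebyshev series of
`√(1 - x²)` truncated at degree `2⌊N/2⌋`; then `ω_j = (π / N) W(x_j)`, so the quadrature sum for `P`
is the `N`-point Gauss–Chebyshev sum for `W P`. As long as `deg (W P) < 2N`, that sum equals the
integral of `W P` against `dx / √(1 - x²)`. Since `W` and `√(1 - x²)` have the same Chebyshev
coefficients up to degree `2⌊N/2⌋ + 1`, this is `∫ P dx` when `deg P ≤ 2⌊N/2⌋ + 1`. Both degree
conditions hold as soon as `deg P < 2⌈N/2⌉`, which for odd `N` includes `deg P = N`.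
-/

open Real

/-- The Fejér (Chebyshev) angles `θ_j = π(2j+1)/(2N)`. -/
noncomputable def fejerAngle (N j : ℕ) : ℝ :=
  π * (2 * j + 1) / (2 * N)

/-- The Fejér (Chebyshev) nodes `x_j = cos θ_j`. -/
noncomputable def fejerNode (N j : ℕ) : ℝ :=
  Real.cos (fejerAngle N j)

/-- The weights of Fejér's first quadrature rule. -/
noncomputable def fejerWeight (N j : ℕ) : ℝ :=
  (2 / N) * (1 - 2 * ∑ ℓ ∈ Finset.Icc 1 (N / 2),
    Real.cos (2 * ℓ * fejerAngle N j) / (4 * (ℓ : ℝ) ^ 2 - 1))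

open Polynomial Polynomial.Chebyshev MeasureTheory Finset

/-- The Chebyshev series of `√(1 - x²)` truncated at degree `2M`. With `x = cos θ` it is a partial
sum of the Fourier series `|sin θ| = 2/π - (4/π) ∑ cos (2ℓθ) / (4ℓ² - 1)`. -/
noncomputable def sqrtOneSubSqSeries (M : ℕ) : ℝ[X] :=
  (2 / π) • (1 - (2 : ℝ) • ∑ l ∈ Icc 1 M, (1 / (4 * (l : ℝ) ^ 2 - 1)) • T ℝ (2 * l))

theorem natDegree_sqrtOneSubSqSeries_le (M : ℕ) : (sqrtOneSubSqSeries M).natDegree ≤ 2 * M := by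
  refine (natDegree_smul_le _ _).trans ((natDegree_sub_le _ _).trans (max_le (by simp) ?_))
  refine (natDegree_smul_le _ _).trans (natDegree_sum_le_of_forall_le _ _ fun l hl => ?_)
  refine (natDegree_smul_le _ _).trans ?_
  have := (mem_Icc.1 hl).2
  rw [natDegree_T]
  omega

theorem fejerWeight_eq_eval_sqrtOneSubSqSeries (N j : ℕ) :
    fejerWeight N j = π / N * (sqrtOneSubSqSeries (N / 2)).eval (fejerNode N j) := by
  have hcoeff : (2 / N : ℝ) = π / N * (2 / π) := by field
  have hT (l : ℕ) : (T ℝ (2 * l)).eval (fejerNode N j) = cos (2 * l * fejerAngle N j) := by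
    rw [fejerNode, T_real_cos]
    norm_cast
  simp only [fejerWeight, sqrtOneSubSqSeries, eval_smul, eval_sub, eval_one, eval_finsetSum, hT,
    smul_eq_mul, one_div_mul_eq_div, hcoeff, mul_assoc]

theorem sum_fejerWeight_mul_eval (N : ℕ) (P : ℝ[X]) :
    ∑ j ∈ range N, fejerWeight N j * P.eval (fejerNode N j) =
      sumZeroes N (sqrtOneSubSqSeries (N / 2) * P) := by
  have hnode (j : ℕ) : fejerNode N j = cos ((2 * j + 1) / (2 * N) * π) := by
    rw [fejerNode, fejerAngle, mul_div_assoc, mul_comm]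
  simp only [sumZeroes, fejerWeight_eq_eval_sqrtOneSubSqSeries, mul_sum, eval_mul, hnode, mul_assoc]

theorem two_mul_sq_sub_one_mul_T_eq_derivative_T_sub_derivative_T
    (R : Type*) [CommRing R] (k : ℤ) :
    2 * ((k : R[X]) ^ 2 - 1) * T R k =
      ((k : R[X]) - 1) * derivative (T R (k + 1)) -
        ((k : R[X]) + 1) * derivative (T R (k - 1)) := by
  have hU : 2 * T R k = U R k - U R (k - 2) := by
    simpa only [sub_add_cancel] using two_mul_T_eq_U_sub_U R (k - 2)
  rw [T_derivative_eq_U, T_derivative_eq_U, add_sub_cancel_right, show k - 1 - 1 = k - 2 by ring]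
  push_cast
  linear_combination ((k : R[X]) ^ 2 - 1) * hU

theorem sq_sub_one_mul_integral_eval_T (k : ℤ) :
    ((k : ℝ) ^ 2 - 1) * ∫ x in (-1 : ℝ)..1, (T ℝ k).eval x = -(1 + k.negOnePow) := by
  have hderiv (x : ℝ) : HasDerivAt
      (fun x => (k - 1) * (T ℝ (k + 1)).eval x - (k + 1) * (T ℝ (k - 1)).eval x)
      (2 * ((k : ℝ) ^ 2 - 1) * (T ℝ k).eval x) x := by
    have h := congrArg (eval x) (two_mul_sq_sub_one_mul_T_eq_derivative_T_sub_derivative_T ℝ k)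
    simp only [eval_mul, eval_sub, eval_add, eval_pow, eval_intCast, eval_one, eval_ofNat] at h
    rw [h]
    exact ((T ℝ (k + 1)).hasDerivAt x |>.const_mul _).sub
      ((T ℝ (k - 1)).hasDerivAt x |>.const_mul _)
  have hFTC := intervalIntegral.integral_eq_sub_of_hasDerivAt (a := -1) (b := 1)
    (fun x _ => hderiv x) (Continuous.intervalIntegrable (by fun_prop) _ _)
  simp only [intervalIntegral.integral_const_mul, T_eval_one, T_eval_neg_one, Int.negOnePow_succ,
    Int.negOnePow_sub, Int.negOnePow_one] at hFTC
  push_cast at hFTC ⊢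
  linear_combination hFTC / 2

theorem integral_eval_T_of_even {k : ℤ} (hk : Even k) :
    ∫ x in (-1 : ℝ)..1, (T ℝ k).eval x = 2 / (1 - (k : ℝ) ^ 2) := by
  have hodd : Odd (1 - k ^ 2) := odd_one.sub_even (hk.pow_of_ne_zero two_ne_zero)
  have hne : 1 - (k : ℝ) ^ 2 ≠ 0 := by
    have : 1 - k ^ 2 ≠ 0 := fun h => by simp [h] at hodd
    exact_mod_cast this
  have h := sq_sub_one_mul_integral_eval_T k
  rw [Int.negOnePow_even k hk] at h
  push_cast at h
  rw [eq_div_iff hne]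
  linear_combination -h

theorem integral_eval_T_of_odd {k : ℤ} (hk : Odd k) :
    ∫ x in (-1 : ℝ)..1, (T ℝ k).eval x = 0 := by
  simpa [T_eval_neg, Int.negOnePow_odd k hk, neg_eq_self] using
    intervalIntegral.integral_comp_neg (a := -1) (b := 1) (T ℝ k).eval

theorem integral_eval_T_mul_eval_T_measureT {m : ℕ} (hm : m ≠ 0) (k : ℕ) :
    ∫ x, (T ℝ m).eval x * (T ℝ k).eval x ∂measureT = if m = k then π / 2 else 0 := by
  split_ifs with h
  · rw [← h, integral_T_real_mul_self_measureT_of_ne_zero hm]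
  · exact integral_eval_T_real_mul_eval_T_real_measureT_of_ne h

theorem integral_sqrtOneSubSqSeries_mul_T_measureT (M k : ℕ) :
    ∫ x, (sqrtOneSubSqSeries M * T ℝ k).eval x ∂measureT =
      2 / π * ((∫ x, (T ℝ k).eval x ∂measureT) -
        2 * ∑ l ∈ Icc 1 M, 1 / (4 * (l : ℝ) ^ 2 - 1) * if 2 * l = k then π / 2 else 0) := by
  have heval (x : ℝ) : (sqrtOneSubSqSeries M * T ℝ k).eval x = 2 / π * ((T ℝ k).eval x -
      2 * ∑ l ∈ Icc 1 M, 1 / (4 * (l : ℝ) ^ 2 - 1) *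
        ((T ℝ (2 * l)).eval x * (T ℝ k).eval x)) := by
    simp only [sqrtOneSubSqSeries, smul_mul_assoc, sub_mul, one_mul, sum_mul, eval_mul, eval_smul,
      eval_sub, eval_finsetSum, smul_eq_mul]
  have hterm : ∀ l ∈ Icc 1 M, ∫ x, (T ℝ (2 * l)).eval x * (T ℝ k).eval x ∂measureT =
      if 2 * l = k then π / 2 else 0 := fun l hl => by
    have : 2 * l ≠ 0 := by grind
    exact_mod_cast integral_eval_T_mul_eval_T_measureT this k
  simp only [heval]
  rw [integral_const_mul, integral_sub (integrable_measureT (by fun_prop))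
      (integrable_measureT (by fun_prop)), integral_const_mul,
    integral_finsetSum _ fun l _ => integrable_measureT (by fun_prop)]
  simp only [integral_const_mul]
  rw [sum_congr rfl fun l hl => by rw [hterm l hl]]

theorem integral_sqrtOneSubSqSeries_mul_T_measureT_eq_integral {M k : ℕ} (hk : k ≤ 2 * M + 1) :
    ∫ x, (sqrtOneSubSqSeries M * T ℝ k).eval x ∂measureT = ∫ x in (-1 : ℝ)..1, (T ℝ k).eval x := by
  rw [integral_sqrtOneSubSqSeries_mul_T_measureT]
  rcases Nat.even_or_odd' k with ⟨m, rfl | rfl⟩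
  · rw [integral_eval_T_of_even (by simp)]
    simp only [Nat.mul_right_inj two_ne_zero, mul_ite, mul_zero, sum_ite_eq']
    rcases Nat.eq_zero_or_pos m with rfl | hm
    · rw [mul_zero, Nat.cast_zero, integral_eval_T_real_measureT_zero, if_neg (by simp)]
      simp [pi_ne_zero]
    rw [integral_eval_T_real_measureT_of_ne_zero (by omega), if_pos (mem_Icc.2 (by omega))]
    have hden : 1 - (((2 * m : ℕ) : ℤ) : ℝ) ^ 2 = -(4 * (m : ℝ) ^ 2 - 1) := by
      push_cast
      ring
    rw [hden]
    field
  · rw [integral_eval_T_of_odd (by simp), integral_eval_T_real_measureT_of_ne_zero (by omega),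
      sum_eq_zero fun l _ => by rw [if_neg (by omega), mul_zero]]
    simp

theorem integral_sqrtOneSubSqSeries_mul_measureT_eq_integral {M : ℕ} {P : ℝ[X]}
    (hP : P.natDegree ≤ 2 * M + 1) :
    ∫ x, (sqrtOneSubSqSeries M * P).eval x ∂measureT = ∫ x in (-1 : ℝ)..1, P.eval x := by
  have hmem : P ∈ Submodule.span ℝ (chebyshevTsequence ℝ '' Set.Iic (2 * M + 1)) := by
    rw [Sequence.span_degreeLE _ (by simp), mem_degreeLE]
    exact degree_le_of_natDegree_le hP
  clear hP
  induction hmem using Submodule.span_induction with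
  | mem Q hQ =>
    obtain ⟨k, hk, rfl⟩ := hQ
    exact integral_sqrtOneSubSqSeries_mul_T_measureT_eq_integral hk
  | zero => simp
  | add Q R _ _ hQ hR =>
    simp only [mul_add, eval_add]
    rw [integral_add (integrable_measureT (by fun_prop)) (integrable_measureT (by fun_prop)),
      intervalIntegral.integral_add (Q.continuous.intervalIntegrable _ _)
        (R.continuous.intervalIntegrable _ _), hQ, hR]
  | smul c Q _ hQ =>
    simp only [mul_smul_comm, eval_smul, smul_eq_mul]
    rw [integral_const_mul, intervalIntegral.integral_const_mul, hQ]

theorem fejer_first_rule_exact_general (N : ℕ) (P : ℝ[X])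
    (hP : P.natDegree < 2 * ((N + 1) / 2)) :
    ∑ j ∈ range N, fejerWeight N j * P.eval (fejerNode N j) = ∫ x in (-1 : ℝ)..1, P.eval x := by
  have hdeg : (sqrtOneSubSqSeries (N / 2) * P).natDegree < 2 * N := by
    have := natDegree_mul_le_of_le (natDegree_sqrtOneSubSqSeries_le (N / 2)) (le_refl P.natDegree)
    omega
  rw [sum_fejerWeight_mul_eval, ← integral_eq_sumZeroes (by omega)]
  · exact integral_sqrtOneSubSqSeries_mul_measureT_eq_integral (by omega)
  · exact_mod_cast degree_le_natDegree.trans_lt (Nat.cast_lt.2 hdeg)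

theorem fejer_first_rule_exact (N : ℕ) (hN : 0 < N) (P : Polynomial ℝ)
    (hP : P.natDegree ≤ N - 1) :
    ∑ j ∈ Finset.range N, fejerWeight N j * P.eval (fejerNode N j) =
      ∫ x in (-1 : ℝ)..1, P.eval x :=
  fejer_first_rule_exact_general N P (by omega)
end

section
/- The weights of Fejér's first quadrature rule are strictly positive: ω_j > 0 for every j = 0, …, N − 1. -/
open Real

/-! Since every cosine is at most `1` and every denominator `4ℓ² - 1` is positive, the sum in the
weight is at most `∑ 1 / (4ℓ² - 1)`. This telescopes, because
`2 / (4ℓ² - 1) = 1 / (2ℓ - 1) - 1 / (2ℓ + 1)`, and its partial sums `m / (2m + 1)` stay below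
`1 / 2`. -/

theorem sum_Icc_one_div_four_mul_sq_sub_one {K : Type*} [Field K] [CharZero K] (m : ℕ) :
    ∑ ℓ ∈ Finset.Icc 1 m, 1 / (4 * (ℓ : K) ^ 2 - 1) = (m : K) / (2 * m + 1) := by
  induction m with
  | zero => simp
  | succ k ih =>
    have hk₁ : 2 * (k : K) + 1 ≠ 0 := by exact_mod_cast (2 * k).succ_ne_zero
    have hk₃ : 2 * (k : K) + 3 ≠ 0 := by exact_mod_cast (2 * k + 2).succ_ne_zero
    have hfactor : 4 * ((k + 1 : ℕ) : K) ^ 2 - 1 = (2 * k + 1) * (2 * k + 3) := by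
      push_cast
      ring
    have hdenom : 2 * ((k + 1 : ℕ) : K) + 1 = 2 * k + 3 := by
      push_cast
      ring
    rw [Finset.sum_Icc_succ_top (Nat.le_add_left 1 k), ih, hfactor, hdenom]
    push_cast
    rw [div_add_div _ _ hk₁ (mul_ne_zero hk₁ hk₃),
      div_eq_div_iff (mul_ne_zero hk₁ (mul_ne_zero hk₁ hk₃)) hk₃]
    ring

section LinearOrderedField

variable {K : Type*} [Field K] [LinearOrder K] [IsStrictOrderedRing K]

theorem sum_Icc_one_div_four_mul_sq_sub_one_lt_half (m : ℕ) :
    ∑ ℓ ∈ Finset.Icc 1 m, 1 / (4 * (ℓ : K) ^ 2 - 1) < 1 / 2 := by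
  rw [sum_Icc_one_div_four_mul_sq_sub_one, div_lt_div_iff₀ (by positivity) two_pos]
  linarith

theorem sum_Icc_div_four_mul_sq_sub_one_lt_half {m : ℕ} {c : ℕ → K}
    (hc : ∀ ℓ ∈ Finset.Icc 1 m, c ℓ ≤ 1) :
    ∑ ℓ ∈ Finset.Icc 1 m, c ℓ / (4 * (ℓ : K) ^ 2 - 1) < 1 / 2 := by
  refine (Finset.sum_le_sum fun ℓ hℓ ↦ ?_).trans_lt
    (sum_Icc_one_div_four_mul_sq_sub_one_lt_half m)
  have one_le : (1 : K) ≤ ℓ := by exact_mod_cast (Finset.mem_Icc.mp hℓ).1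
  have denom_nonneg : 0 ≤ 4 * (ℓ : K) ^ 2 - 1 := by nlinarith
  exact div_le_div_of_nonneg_right (hc ℓ hℓ) denom_nonneg

end LinearOrderedField

theorem fejer_weights_positive_general {N : ℕ} (hN : 0 < N) (θ : ℝ) :
    0 < (2 / N : ℝ) * (1 - 2 * ∑ ℓ ∈ Finset.Icc 1 (N / 2),
      cos (2 * ℓ * θ) / (4 * (ℓ : ℝ) ^ 2 - 1)) := by
  have sum_lt_half : ∑ ℓ ∈ Finset.Icc 1 (N / 2), cos (2 * ℓ * θ) / (4 * (ℓ : ℝ) ^ 2 - 1) < 1 / 2 :=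
    sum_Icc_div_four_mul_sq_sub_one_lt_half fun ℓ _ ↦ cos_le_one (2 * ℓ * θ)
  exact mul_pos (by positivity) (by linarith)

theorem fejer_weights_positive (N : ℕ) (hN : 0 < N) :
    ∀ j : ℕ, j ≤ N - 1 → 0 < fejerWeight N j :=
  fun j _ ↦ fejer_weights_positive_general hN (fejerAngle N j)
end

section
/- Smoothing of an inverse-square-root edge singularity by a change of variables with vanishing derivatives: let p ≥ 4 be an even integer, let w : ℝ → ℝ be infinitely differentiable with w(0) = 0, with k-th derivative vanishing at 0 for every 1 ≤ k ≤ p − 1, and with p-th derivative at 0 strictly positive, and let Φ : ℝ → ℝ be infinitely differentiable. Then there exists δ > 0 such that the function f : [0, δ) → ℝ defined by f(x) = Φ(w(x))·w'(x)/√(w(x)) for x ∈ (0, δ) and f(0) = 0 is (p/2 − 1) times continuously differentiable on [0, δ). -/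
/-!
Since `w` vanishes to order `p` at the edge, Taylor's formula with integral remainder gives
`w x = x ^ p * g x` with `g 0 > 0`; applied to `w'`, it gives `w' x = x ^ (p - 1) * h x`. The
factors `g` and `h` are smooth by differentiation under the integral sign. Hence
`Φ (w x) * w' x / √(w x) = x ^ (p / 2 - 1) * (Φ (w x) * h x / √(g x))` for small `x > 0`. The second
factor is as smooth as `Φ`, `g` and `h` allow, so the only obstruction is the real power
`x ^ (p / 2 - 1)`, which is a monomial when `p` is even and of class `C^n` for `n ≤ p / 2 - 1` in
general.
-/

open Real

section ParametricIntegral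

variable {E : Type*} [NormedAddCommGroup E] [NormedSpace ℝ E]

lemma hasDerivAt_intervalIntegral_of_continuous {F F' : ℝ → ℝ → E}
    (hF : ∀ x, Continuous (F x)) (hF' : Continuous F'.uncurry)
    (hderiv : ∀ x t, HasDerivAt (F · t) (F' x t) x) (a b x₀ : ℝ) :
    HasDerivAt (fun x => ∫ t in a..b, F x t) (∫ t in a..b, F' x₀ t) x₀ := by
  obtain ⟨C, hC⟩ := ((isCompact_closedBall x₀ 1).prod isCompact_uIcc).exists_bound_of_continuousOn
    (hF'.continuousOn (s := Metric.closedBall x₀ 1 ×ˢ Set.uIcc a b))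
  exact (intervalIntegral.hasDerivAt_integral_of_dominated_loc_of_deriv_le
    (bound := fun _ => C) (Metric.closedBall_mem_nhds x₀ one_pos)
    (.of_forall fun x => (hF x).aestronglyMeasurable)
    ((hF x₀).intervalIntegrable a b)
    (hF'.uncurry_left x₀).aestronglyMeasurable
    (.of_forall fun t ht x hx => hC (x, t) ⟨hx, Set.uIoc_subset_uIcc ht⟩)
    intervalIntegrable_const
    (.of_forall fun t _ x _ => hderiv x t)).2

lemma contDiff_intervalIntegral {n : ℕ∞} {F : ℝ → ℝ → E} (hF : ContDiff ℝ n F.uncurry) (a b : ℝ) :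
    ContDiff ℝ n fun x => ∫ t in a..b, F x t := by
  refine contDiff_iff_forall_nat_le.2 fun m hm => ?_
  replace hF : ContDiff ℝ m F.uncurry := hF.of_le (mod_cast hm)
  clear hm
  induction m generalizing F with
  | zero =>
    exact contDiff_zero.2
      (intervalIntegral.continuous_parametric_intervalIntegral_of_continuous' hF.continuous a b)
  | succ m ih =>
    let F' : ℝ → ℝ → E := fun x t => fderiv ℝ F.uncurry (x, t) (1, 0)
    have hF' : ContDiff ℝ m F'.uncurry := (hF.fderiv_right le_rfl).clm_apply contDiff_const
    have hpartial (x t : ℝ) : HasDerivAt (F · t) (F' x t) x :=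
      HasFDerivAt.comp_hasDerivAt (f := fun x => (x, t)) x
        (hF.differentiable (by simp) (x, t)).hasFDerivAt
        ((hasDerivAt_id x).prodMk (hasDerivAt_const x t))
    have hint := hasDerivAt_intervalIntegral_of_continuous
      (fun x => hF.continuous.uncurry_left x) hF'.continuous hpartial a b
    refine (contDiff_succ_iff_deriv (n := m)).2 ⟨fun x => (hint x).differentiableAt, by simp, ?_⟩
    rw [funext fun x => (hint x).deriv]
    exact ih hF'

end ParametricIntegral

section TaylorFactor

variable {E : Type*} [NormedAddCommGroup E] [NormedSpace ℝ E] [CompleteSpace E]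

open scoped Nat in
lemma eq_sub_pow_smul_integral_iteratedDeriv {f : ℝ → E} {m : ℕ} {a : ℝ}
    (hf : ContDiff ℝ (m + 1) f) (hflat : ∀ k < m + 1, iteratedDeriv k f a = 0) (x : ℝ) :
    f x = (x - a) ^ (m + 1) • (m ! : ℝ)⁻¹ •
      ∫ t in (0 : ℝ)..1, (1 - t) ^ m • iteratedDeriv (m + 1) f (a + t * (x - a)) := by
  have htaylor := map_add_eq_sum_add_integral_iteratedFDeriv (x := a) (y := x - a)
    fun _ _ => hf.contDiffAt
  have hpoly : ∑ k ∈ Finset.range (m + 1),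
      (k ! : ℝ)⁻¹ • (x - a) ^ k • iteratedDeriv k f a = 0 :=
    Finset.sum_eq_zero fun k hk => by rw [hflat k (Finset.mem_range.1 hk), smul_zero, smul_zero]
  simp only [iteratedFDeriv_apply_eq_iteratedDeriv_mul_prod, Finset.prod_const, Finset.card_univ,
    Fintype.card_fin, hpoly, zero_add, add_sub_cancel, smul_eq_mul] at htaylor
  simpa only [smul_comm _ ((x - a) ^ (m + 1)), intervalIntegral.integral_smul] using htaylor

open scoped Nat in
lemma exists_contDiff_eq_sub_pow_smul {n : ℕ∞} {f : ℝ → E} {p : ℕ} {a : ℝ}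
    (hf : ContDiff ℝ (n + p) f) (hflat : ∀ k < p, iteratedDeriv k f a = 0) :
    ∃ g : ℝ → E, ContDiff ℝ n g ∧ g a = (p ! : ℝ)⁻¹ • iteratedDeriv p f a ∧
      ∀ x, f x = (x - a) ^ p • g x := by
  obtain _ | m := p
  · exact ⟨f, by simpa using hf, by simp, by simp⟩
  have hderiv : ContDiff ℝ n (iteratedDeriv (m + 1) f) := by
    rw [iteratedDeriv_eq_equiv_comp]
    exact (LinearIsometryEquiv.contDiff _).comp (hf.iteratedFDeriv_right le_rfl)
  refine ⟨fun x => (m ! : ℝ)⁻¹ •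
      ∫ t in (0 : ℝ)..1, (1 - t) ^ m • iteratedDeriv (m + 1) f (a + t * (x - a)),
    contDiff_const.smul (contDiff_intervalIntegral ?_ 0 1), ?_,
    eq_sub_pow_smul_integral_iteratedDeriv (hf.of_le (mod_cast le_add_self)) hflat⟩
  · unfold Function.uncurry
    fun_prop
  · have hweight : ∫ t in (0 : ℝ)..1, (1 - t) ^ m = ((m : ℝ) + 1)⁻¹ := by
      rw [intervalIntegral.integral_comp_sub_left (· ^ m)]
      simp [integral_pow]
    simp only [sub_self, mul_zero, add_zero, intervalIntegral.integral_smul_const, hweight,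
      smul_smul, Nat.factorial_succ]
    push_cast
    rw [mul_inv_rev]

lemma exists_contDiff_deriv_eq_sub_pow_smul {n : ℕ∞} {f : ℝ → E} {p : ℕ} {a : ℝ} (hp : p ≠ 0)
    (hf : ContDiff ℝ (n + p) f) (hflat : ∀ k < p, iteratedDeriv k f a = 0) :
    ∃ h : ℝ → E, ContDiff ℝ n h ∧ ∀ x, deriv f x = (x - a) ^ (p - 1) • h x := by
  obtain ⟨m, rfl⟩ := Nat.exists_eq_succ_of_ne_zero hp
  have hderiv : ContDiff ℝ (n + m) (deriv f) :=
    ContDiff.deriv' (by simpa only [Nat.cast_succ, ← add_assoc] using hf)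
  obtain ⟨h, hh, -, hfactor⟩ := exists_contDiff_eq_sub_pow_smul (a := a) hderiv fun k hk => by
    rw [← iteratedDeriv_succ', hflat (k + 1) (by lia)]
  exact ⟨h, hh, hfactor⟩

end TaylorFactor

lemma pow_pred_mul_div_sqrt_pow_mul {x : ℝ} (hx : 0 < x) {p : ℕ} (hp : p ≠ 0) (c d : ℝ) :
    x ^ (p - 1) * c / √(x ^ p * d) = x ^ ((p : ℝ) / 2 - 1) * (c / √d) := by
  have hpow : x ^ (p - 1) / √(x ^ p) = x ^ ((p : ℝ) / 2 - 1) := by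
    rw [sqrt_eq_rpow, ← rpow_natCast, ← rpow_natCast, ← rpow_mul hx.le, ← rpow_sub hx,
      Nat.cast_pred (Nat.pos_of_ne_zero hp)]
    ring_nf
  rw [sqrt_mul (pow_nonneg hx.le p), mul_div_mul_comm, hpow]

lemma contDiff_rpow_half_sub_one {n : ℕ∞} {p : ℕ} (hp : 2 ≤ p) (hn : Even p ∨ 2 * n + 2 ≤ p) :
    ContDiff ℝ n fun x : ℝ => x ^ ((p : ℝ) / 2 - 1) := by
  obtain ⟨q, rfl⟩ | hn := hn
  · have hexp : ((q + q : ℕ) : ℝ) / 2 - 1 = (q - 1 : ℕ) := by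
      rw [Nat.cast_pred (by lia)]
      push_cast
      ring
    simp only [hexp, rpow_natCast]
    fun_prop
  · lift n to ℕ using by rintro rfl; simp at hn
    have hn' : (2 * n + 2 : ℝ) ≤ p := mod_cast hn
    exact contDiff_rpow_const_of_le (by linarith)

theorem smoothing_of_inverse_sqrt_edge_singularity_general
    {p : ℕ} (hp : 2 < p) {n : ℕ∞} (hn : Even p ∨ 2 * n + 2 ≤ p)
    {w : ℝ → ℝ} (hw : ContDiff ℝ (n + p) w) (hflat : ∀ k < p, iteratedDeriv k w 0 = 0)
    (hpos : 0 < iteratedDeriv p w 0) {Φ : ℝ → ℝ} (hΦ : ContDiff ℝ n Φ) :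
    ∃ δ > (0 : ℝ),
      ContDiffOn ℝ n
        (fun x : ℝ => if x = 0 then 0 else Φ (w x) * deriv w x / Real.sqrt (w x))
        (Set.Ico 0 δ) := by
  obtain ⟨g, hg, hg0, hwg⟩ := exists_contDiff_eq_sub_pow_smul hw hflat
  obtain ⟨h, hh, hwh⟩ := exists_contDiff_deriv_eq_sub_pow_smul (by lia) hw hflat
  simp only [sub_zero, smul_eq_mul] at hg0 hwg hwh
  have hg0_pos : 0 < g 0 := by rw [hg0]; positivity
  obtain ⟨δ, hδ, hball⟩ := Metric.eventually_nhds_iff.1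
    (hg.continuous.continuousAt.eventually (lt_mem_nhds hg0_pos))
  have hgpos : ∀ x ∈ Set.Ico 0 δ, 0 < g x := fun x hx =>
    hball (by simpa [abs_of_nonneg hx.1] using hx.2)
  refine ⟨δ, hδ, ContDiffOn.congr (f := fun x => x ^ ((p : ℝ) / 2 - 1) * (Φ (w x) * h x / √(g x)))
    ?_ fun x hx => ?_⟩
  · exact (contDiff_rpow_half_sub_one hp.le hn).contDiffOn.mul <|
      ((hΦ.comp (hw.of_le le_self_add)).mul hh).contDiffOn.div
        (hg.contDiffOn.sqrt fun x hx => (hgpos x hx).ne')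
        fun x hx => (sqrt_pos.2 (hgpos x hx)).ne'
  · obtain rfl | hx0 := eq_or_ne x 0
    · have hexp : (p : ℝ) / 2 - 1 ≠ 0 := by
        have : (2 : ℝ) < p := mod_cast hp
        linarith
      simp [zero_rpow hexp]
    · rw [if_neg hx0, hwh, hwg, mul_left_comm,
        pow_pred_mul_div_sqrt_pow_mul (hx.1.lt_of_ne' hx0) (by lia)]

theorem smoothing_of_inverse_sqrt_edge_singularity
    (p : ℕ) (hp : 4 ≤ p) (hpe : Even p)
    (w : ℝ → ℝ) (hw : ContDiff ℝ (⊤ : ℕ∞) w) (hw0 : w 0 = 0)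
    (hflat : ∀ k : ℕ, 1 ≤ k → k ≤ p - 1 → iteratedDeriv k w 0 = 0)
    (hpos : 0 < iteratedDeriv p w 0)
    (Φ : ℝ → ℝ) (hΦ : ContDiff ℝ (⊤ : ℕ∞) Φ) :
    ∃ δ > (0 : ℝ),
      ContDiffOn ℝ (p / 2 - 1 : ℕ)
        (fun x : ℝ => if x = 0 then 0 else Φ (w x) * deriv w x / Real.sqrt (w x))
        (Set.Ico 0 δ) := by
  have hflat₀ : ∀ k < p, iteratedDeriv k w 0 = 0
    | 0, _ => by rwa [iteratedDeriv_zero]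
    | k + 1, hk => hflat (k + 1) (by lia) (by lia)
  exact smoothing_of_inverse_sqrt_edge_singularity_general (n := (p / 2 - 1 : ℕ)) (by lia)
    (.inl hpe) (hw.of_le (mod_cast le_top)) hflat₀ hpos (hΦ.of_le (mod_cast le_top))
end
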